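/- arXiv:1203.1027 — 2 statements merged into one kernel-verified Lean document; each statement's English description precedes it below -/
import Mathlib

section
/- Let n ≥ 1. Let R^{S_{n+1}} denote the subring of S_{n+1}-invariant elements of R (symmetric Laurent polynomials). The R-algebra map k : R ⊗_{R^{S_{n+1}}} R → Maps(S_{n+1}, R) determined on decomposable elements by k(f ⊗ g)(w) = (w·f)·g is a well-defined ring homomorphism, and it is a ring isomorphism onto K_α(Γ). -/
open scoped TensorProduct

/-- The Laurent polynomial ring `R = ℤ[z₁^{±1},…,z_n^{±1}]`, realized as the group
algebra of `ℤⁿ` over `ℤ`. -/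
abbrev Laur (n : ℕ) : Type := AddMonoidAlgebra ℤ (Fin n → ℤ)

/-- The variable `z_j ∈ R`. -/
noncomputable def Z (n : ℕ) (j : Fin n) : Laur n :=
  AddMonoidAlgebra.single (Pi.single j 1) 1

/-- The action of `σ ∈ S_n` on `R` by the ring automorphism permuting the variables,
`σ·z_i = z_{σ(i)}`. -/
noncomputable def permAut (n : ℕ) (σ : Equiv.Perm (Fin n)) : Laur n ≃ₐ[ℤ] Laur n :=
  AddMonoidAlgebra.domCongr ℤ ℤ
    { Equiv.piCongrLeft' (fun _ => ℤ) σ with map_add' := fun _ _ => rfl }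

/-- Membership in `K_α(Γ)` for the permutahedron `Γ` (GKM graph of `Fl(ℂ^{n+1})`, vertex
set `S_{n+1}`, edges `σ ∼ σ(i j)` with label `z_{σ(i)} − z_{σ(j)}`). -/
def IsKPClass (n : ℕ) (h : Equiv.Perm (Fin (n + 1)) → Laur (n + 1)) : Prop :=
  ∀ (σ : Equiv.Perm (Fin (n + 1))) (i j : Fin (n + 1)), i ≠ j →
    (Z (n + 1) (σ i) - Z (n + 1) (σ j)) ∣ h σ - h (σ * Equiv.swap i j)

/-- The subring `R^{S_n}` of symmetric Laurent polynomials. -/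
noncomputable def Rsym (n : ℕ) : Subring (Laur n) where
  carrier := {f | ∀ σ : Equiv.Perm (Fin n), permAut n σ f = f}
  mul_mem' := fun {a b} ha hb σ => by rw [map_mul, ha σ, hb σ]
  one_mem' := fun σ => map_one _
  add_mem' := fun {a b} ha hb σ => by rw [map_add, ha σ, hb σ]
  zero_mem' := fun σ => map_zero _
  neg_mem' := fun {a} ha σ => by rw [map_neg, ha σ]

/-!
Let `∂ h = (∑ w, sgn w · h w) / Δ`, where `Δ` is the Vandermonde determinant of the variables. By
the GKM congruences every `z_i - z_j` divides the numerator, and up to sign these are pairwise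
non-associated primes, so `∂` maps `K_α(Γ)` to `R`; on the functions `w ↦ w·f` its values are
symmetric. The class of the diagonal `∏_{i<j} (z_j ⊗ 1 - 1 ⊗ z_i)` restricts under `k` to `Δ` at
the identity and to `0` elsewhere, so writing it as `∑ a ⊗ b` gives dual families for the pairing
`(h, h') ↦ ∂ (h h')`, and `h ↦ ∑ b ⊗ ∂ (h · k (a ⊗ 1))` is a two-sided inverse of `k`.
-/

section Duality

/-- The sum of the values of a function on `G`, weighted by a sign character `χ`: the numerator of
the pushforward to a point. -/
def signedSum {G A : Type*} [Group G] [Fintype G] [CommRing A] (χ : G →* ℤˣ) :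
    (G → A) →ₗ[A] A :=
  ∑ w, χ w • LinearMap.proj w

lemma signedSum_apply {G A : Type*} [Group G] [Fintype G] [CommRing A] (χ : G →* ℤˣ) (h : G → A) :
    signedSum χ h = ∑ w, χ w • h w := by
  simp [signedSum]

variable {S A G : Type*} [CommRing S] [CommRing A] [Algebra S A] [Group G]
  [MulSemiringAction G A]

variable (S A G) in
/-- The map `k : A ⊗[S] A → Maps(G, A)`, `k (f ⊗ g) w = (w • f) * g`, of a group `G` acting on `A`
by `S`-algebra automorphisms. For the flag manifold it is restriction to the torus fixed points. -/
def restrictionMap [SMulCommClass G S A] : A ⊗[S] A →ₐ[S] (G → A) :=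
  AlgHom.pi fun w ↦
    Algebra.TensorProduct.productMap (MulSemiringAction.toAlgHom S A w) (AlgHom.id S A)

@[simp]
lemma restrictionMap_tmul [SMulCommClass G S A] (f g : A) (w : G) :
    restrictionMap S A G (f ⊗ₜ g) w = (w • f) * g := by
  simp [restrictionMap]

lemma restrictionMap_tmul_eq_smul [SMulCommClass G S A] (f g : A) :
    restrictionMap S A G (f ⊗ₜ g) = g • fun w : G ↦ w • f := by
  ext w
  rw [restrictionMap_tmul, Pi.smul_apply, smul_eq_mul, mul_comm]

variable (G) in
/-- A finite family of pairs `(a, b)` is a `Δ`-dual system when `∑ a ⊗ b` restricts to `Δ` at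
`1 : G` and to `0` at every other point of `G`, as the class of the diagonal does. -/
def IsDualSystem [DecidableEq G] (Δ : A) (s : Finset (A × A)) : Prop :=
  ∀ w : G, ∑ p ∈ s, (w • p.1) * p.2 = Pi.single (M := fun _ ↦ A) 1 Δ w

lemma exists_isDualSystem [SMulCommClass G S A] [DecidableEq G] {Δ : A} {D : A ⊗[S] A}
    (hD : restrictionMap S A G D = Pi.single 1 Δ) : ∃ s, IsDualSystem G Δ s := by
  obtain ⟨s, rfl⟩ := TensorProduct.exists_finset D
  exact ⟨s, fun w ↦ by simp [← hD]⟩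

lemma IsDualSystem.sum_smul_mul_smul [DecidableEq G] {Δ : A} {s : Finset (A × A)}
    (hs : IsDualSystem G Δ s) (u w : G) :
    ∑ p ∈ s, (w • p.1) * (u • p.2) = Pi.single (M := fun _ ↦ A) u (u • Δ) w := by
  have translated := congrArg (u • ·) (hs (u⁻¹ * w))
  simpa [Finset.smul_sum, smul_mul', smul_smul, Pi.single_apply, inv_mul_eq_one, eq_comm,
    apply_ite (u • · : A → A)] using translated

variable [Fintype G] {χ : G →* ℤˣ}

lemma smul_signedSum_orbit (u : G) (f : A) :
    u • signedSum χ (fun w ↦ w • f) = χ u • signedSum χ (fun w ↦ w • f) := by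
  simp only [signedSum_apply, Finset.smul_sum, smul_comm u, smul_smul]
  refine Fintype.sum_equiv (Equiv.mulLeft u) _ _ fun w ↦ ?_
  rw [Equiv.coe_mulLeft, map_mul, ← mul_assoc, Int.units_mul_self, one_mul]

variable {Δ : A} {s : Finset (A × A)}

lemma IsDualSystem.sum_signedSum_mul [DecidableEq G] (hs : IsDualSystem G Δ s)
    (hΔ : ∀ w : G, w • Δ = χ w • Δ) (h : G → A) (u : G) :
    ∑ p ∈ s, signedSum χ (h * fun w ↦ w • p.1) * (u • p.2) = Δ * h u :=
  calc ∑ p ∈ s, signedSum χ (h * fun w ↦ w • p.1) * (u • p.2)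
      = ∑ w, χ w • (h w * ∑ p ∈ s, (w • p.1) * (u • p.2)) := by
        simp only [signedSum_apply, Finset.sum_mul, Finset.mul_sum, Finset.smul_sum]
        rw [Finset.sum_comm]
        simp only [Pi.mul_apply, smul_mul_assoc, mul_assoc]
    _ = χ u • (h u * χ u • Δ) := by
        simp only [hs.sum_smul_mul_smul, hΔ]
        rw [Finset.sum_eq_single u (by simp +contextual) (by simp), Pi.single_eq_same]
    _ = Δ * h u := by
        rw [mul_smul_comm, smul_smul, Int.units_mul_self, one_smul, mul_comm]

lemma exists_algebraMap_mul_eq_signedSum [Algebra.IsInvariant S A G] (hreg : IsLeftRegular Δ)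
    (hΔ : ∀ w : G, w • Δ = χ w • Δ) {f : A} (hf : Δ ∣ signedSum χ fun w ↦ w • f) :
    ∃ c : S, Δ * algebraMap S A c = signedSum χ fun w ↦ w • f := by
  obtain ⟨a, ha⟩ := hf
  have ha_invariant (u : G) : u • a = a := by
    have hu := smul_signedSum_orbit (χ := χ) u f
    rw [ha, smul_mul', hΔ, smul_mul_assoc] at hu
    exact hreg (smul_left_cancel _ hu)
  obtain ⟨c, rfl⟩ := Algebra.IsInvariant.isInvariant (A := S) a ha_invariant
  exact ⟨c, ha.symm⟩

lemma IsDualSystem.mem_range_restrictionMap [SMulCommClass G S A] [DecidableEq G]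
    (hs : IsDualSystem G Δ s) (hreg : IsLeftRegular Δ) (hΔ : ∀ w : G, w • Δ = χ w • Δ) {h : G → A}
    (hh : ∀ f, Δ ∣ signedSum χ (h * fun w ↦ w • f)) :
    h ∈ Set.range (restrictionMap S A G) := by
  choose c hc using hh
  refine ⟨∑ p ∈ s, p.2 ⊗ₜ c p.1, funext fun u ↦ hreg ?_⟩
  calc Δ * restrictionMap S A G (∑ p ∈ s, p.2 ⊗ₜ c p.1) u
      = ∑ p ∈ s, Δ * c p.1 * (u • p.2) := by
        simp only [map_sum, Finset.sum_apply, restrictionMap_tmul, Finset.mul_sum]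
        exact Finset.sum_congr rfl fun p _ ↦ by ring
    _ = Δ * h u := by
        simp only [← hc, hs.sum_signedSum_mul hΔ]

lemma IsDualSystem.eq_sum_smul [DecidableEq G] (hs : IsDualSystem G Δ s)
    (hreg : IsLeftRegular Δ) (hΔ : ∀ w : G, w • Δ = χ w • Δ) {c : A → S}
    (hc : ∀ f, Δ * algebraMap S A (c f) = signedSum χ fun w ↦ w • f) (f : A) :
    f = ∑ p ∈ s, c (f * p.1) • p.2 := by
  refine hreg ?_
  have inversion := hs.sum_signedSum_mul hΔ (fun w ↦ w • f) 1
  simp only [Pi.mul_def, ← smul_mul', ← hc, one_smul] at inversion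
  simp only [← inversion, Finset.mul_sum, Algebra.smul_def, mul_assoc]

lemma IsDualSystem.exists_eq_sum_tmul [SMulCommClass G S A] [Algebra.IsInvariant S A G]
    [DecidableEq G] (hs : IsDualSystem G Δ s) (hreg : IsLeftRegular Δ)
    (hΔ : ∀ w : G, w • Δ = χ w • Δ) (hdvd : ∀ f, Δ ∣ signedSum χ fun w : G ↦ w • f) (x : A ⊗[S] A) :
    ∃ y : A × A → A, x = ∑ p ∈ s, p.2 ⊗ₜ y p ∧
      ∀ p, Δ * y p = signedSum χ (restrictionMap S A G x * fun w ↦ w • p.1) := by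
  induction x using TensorProduct.induction_on with
  | zero => exact ⟨0, by simp, by simp⟩
  | add x x' hx hx' =>
    obtain ⟨y, hxy, hy⟩ := hx
    obtain ⟨y', hxy', hy'⟩ := hx'
    refine ⟨y + y', ?_, fun p ↦ ?_⟩
    · simp only [Pi.add_apply, TensorProduct.tmul_add, Finset.sum_add_distrib, ← hxy, ← hxy']
    · rw [Pi.add_apply, mul_add, hy, hy', map_add, add_mul, map_add]
  | tmul f g =>
    choose c hc using fun f ↦ exists_algebraMap_mul_eq_signedSum (S := S) hreg hΔ (hdvd f)
    refine ⟨fun p ↦ c (f * p.1) • g, ?_, fun p ↦ ?_⟩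
    · conv_lhs => rw [hs.eq_sum_smul hreg hΔ hc f]
      simp only [TensorProduct.sum_tmul, TensorProduct.smul_tmul]
    · calc Δ * c (f * p.1) • g
          = g • signedSum χ (fun w ↦ w • (f * p.1)) := by
            rw [← hc, Algebra.smul_def, smul_eq_mul]
            ring
        _ = signedSum χ (restrictionMap S A G (f ⊗ₜ g) * fun w ↦ w • p.1) := by
            simp only [restrictionMap_tmul_eq_smul, smul_mul_assoc, map_smul, Pi.mul_def, smul_mul']

lemma IsDualSystem.restrictionMap_injective [SMulCommClass G S A] [Algebra.IsInvariant S A G]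
    [DecidableEq G] (hs : IsDualSystem G Δ s) (hreg : IsLeftRegular Δ)
    (hΔ : ∀ w : G, w • Δ = χ w • Δ) (hdvd : ∀ f, Δ ∣ signedSum χ fun w : G ↦ w • f) :
    Function.Injective (restrictionMap S A G) := by
  refine (injective_iff_map_eq_zero _).2 fun x hx ↦ ?_
  obtain ⟨y, rfl, hy⟩ := hs.exists_eq_sum_tmul hreg hΔ hdvd x
  have y_eq_zero (p : A × A) : y p = 0 :=
    hreg (by simpa [hx] using hy p)
  simp [y_eq_zero]

end Duality

lemma prod_dvd_of_prime_of_pairwise_not_dvd {ι M : Type*} [CommMonoidWithZero M] {s : Finset ι}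
    {p : ι → M} {a : M} (hp : ∀ i ∈ s, Prime (p i))
    (hne : (s : Set ι).Pairwise fun i j ↦ ¬ p i ∣ p j) (ha : ∀ i ∈ s, p i ∣ a) :
    ∏ i ∈ s, p i ∣ a := by
  induction s using Finset.cons_induction with
  | empty => simp
  | cons i s hi ih =>
    simp only [Finset.mem_cons, forall_eq_or_imp] at hp ha
    rw [Finset.coe_cons] at hne
    obtain ⟨b, rfl⟩ := ih hp.2 (hne.mono (Set.subset_insert _ _)) ha.2
    have not_dvd_prod : ¬ p i ∣ ∏ j ∈ s, p j := fun h ↦ by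
      obtain ⟨j, hj, hij⟩ := (hp.1.dvd_finsetProd_iff _).1 h
      exact hne (by simp) (by simp [hj]) (by rintro rfl; exact hi hj) hij
    rw [Finset.prod_cons, mul_comm]
    exact mul_dvd_mul_left _ ((hp.1.dvd_or_dvd ha.1).resolve_left not_dvd_prod)

lemma eq_self_of_injective_of_forall_le {α : Type*} [PartialOrder α] [WellFoundedGT α] {f : α → α}
    (hf : Function.Injective f) (hle : ∀ x, x ≤ f x) (x : α) : f x = x := by
  induction x using WellFoundedGT.induction with
  | ind x ih =>
    by_contra hne
    exact hne (hf (ih _ ((hle x).lt_of_ne' hne)))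

section Laurent

variable {m : ℕ}

lemma Z_injective : Function.Injective (Z m) := fun i j h ↦ by
  have hij := congrFun (AddMonoidAlgebra.single_left_injective one_ne_zero h) i
  by_contra hne
  simp [hne] at hij

lemma laur_ringHom_ext {B : Type*} [CommRing B] {φ ψ : Laur m →+* B}
    (h : ∀ i, φ (Z m i) = ψ (Z m i)) : φ = ψ := by
  refine AddMonoidAlgebra.ringHom_ext' (RingHom.ext_int _ _) ?_
  refine MonoidHom.toAdditiveRight.injective ?_
  ext i
  exact h i

lemma dvd_map_sub_map {B : Type*} [CommRing B] {φ ψ : Laur m →+* B} {d : B}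
    (h : ∀ i, d ∣ φ (Z m i) - ψ (Z m i)) (f : Laur m) : d ∣ φ f - ψ f := by
  simp only [← Ideal.mem_span_singleton, ← Ideal.Quotient.mk_eq_mk_iff_sub_mem] at h ⊢
  exact RingHom.congr_fun (laur_ringHom_ext (φ := (Ideal.Quotient.mk _).comp φ)
    (ψ := (Ideal.Quotient.mk _).comp ψ) h) f

lemma permAut_Z (σ : Equiv.Perm (Fin m)) (i : Fin m) : permAut m σ (Z m i) = Z m (σ i) := by
  rw [Z, permAut, AddMonoidAlgebra.domCongr_single, Z]
  exact congrArg (AddMonoidAlgebra.single · 1) (Pi.single_comp_equiv σ.symm i 1)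

/-- The action of `S_m` on `R` through `permAut`. -/
noncomputable instance permAction : MulSemiringAction (Equiv.Perm (Fin m)) (Laur m) where
  smul σ f := permAut m σ f
  one_smul := RingHom.congr_fun (f := (permAut m 1 : Laur m →+* Laur m)) (g := RingHom.id _)
    (laur_ringHom_ext fun i ↦ permAut_Z 1 i)
  mul_smul σ τ := RingHom.congr_fun (f := (permAut m (σ * τ) : Laur m →+* Laur m))
    (g := (permAut m σ : Laur m →+* Laur m).comp (permAut m τ))
    (laur_ringHom_ext fun i ↦ by simp [permAut_Z])
  smul_zero σ := map_zero (permAut m σ)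
  smul_add σ := map_add (permAut m σ)
  smul_one σ := map_one (permAut m σ)
  smul_mul σ := map_mul (permAut m σ)

lemma smul_Z (σ : Equiv.Perm (Fin m)) (i : Fin m) : σ • Z m i = Z m (σ i) :=
  permAut_Z σ i

instance : SMulCommClass (Equiv.Perm (Fin m)) (Rsym m) (Laur m) where
  smul_comm σ c f := by
    rw [Subring.smul_def, Subring.smul_def, smul_eq_mul, smul_mul', smul_eq_mul]
    congr 1
    exact c.2 σ

instance : Algebra.IsInvariant (Rsym m) (Laur m) (Equiv.Perm (Fin m)) where
  isInvariant f hf := ⟨⟨f, hf⟩, rfl⟩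

/-- The substitution `z_i ↦ z_{e i}`. For `e = Function.update id i j` its kernel is the ideal
generated by `z_i - z_j`. -/
noncomputable def renameVars {m' : ℕ} (e : Fin m → Fin m') : Laur m →+* Laur m' :=
  AddMonoidAlgebra.mapDomainRingHom ℤ
    (Fintype.linearCombination ℤ fun i ↦ (Pi.single (e i) 1 : Fin m' → ℤ)).toAddMonoidHom

@[simp]
lemma renameVars_Z {m' : ℕ} (e : Fin m → Fin m') (i : Fin m) :
    renameVars e (Z m i) = Z m' (e i) := by
  simp [renameVars, Z, Fintype.linearCombination_apply_single]

lemma Z_sub_Z_dvd_iff {i j : Fin m} {f : Laur m} :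
    Z m i - Z m j ∣ f ↔ renameVars (Function.update id i j) f = 0 := by
  refine ⟨?_, fun hf ↦ ?_⟩
  · rintro ⟨g, rfl⟩
    by_cases hij : j = i <;> simp [hij]
  · have hd := dvd_map_sub_map (φ := RingHom.id (Laur m))
      (ψ := renameVars (Function.update id i j)) (d := Z m i - Z m j) (fun k ↦ ?_) f
    · simpa [hf] using hd
    · by_cases hk : k = i <;> simp [hk]

lemma prime_Z_sub_Z {i j : Fin m} (hij : i ≠ j) : Prime (Z m i - Z m j) := by
  refine ⟨sub_ne_zero.2 (Z_injective.ne hij), fun hu ↦ ?_, fun f g hfg ↦ ?_⟩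
  · exact one_ne_zero ((map_one _).symm.trans (Z_sub_Z_dvd_iff.1 hu.dvd))
  · simpa only [Z_sub_Z_dvd_iff, map_mul, mul_eq_zero] using hfg

lemma Z_sub_Z_dvd_Z_sub_Z {i j k l : Fin m} (hkl : k ≠ l) (h : Z m i - Z m j ∣ Z m k - Z m l) :
    k = i ∧ l = j ∨ k = j ∧ l = i := by
  rw [Z_sub_Z_dvd_iff, map_sub, renameVars_Z, renameVars_Z, sub_eq_zero, Z_injective.eq_iff] at h
  simp only [Function.update_apply, id] at h
  grind

lemma Z_sub_Z_dvd_sub_swap_smul (i j : Fin m) (f : Laur m) :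
    Z m i - Z m j ∣ f - Equiv.swap i j • f := by
  refine dvd_map_sub_map (φ := RingHom.id (Laur m))
    (ψ := MulSemiringAction.toRingHom _ _ (Equiv.swap i j)) (fun k ↦ ?_) f
  rw [RingHom.id_apply, MulSemiringAction.toRingHom_apply, smul_Z]
  rcases eq_or_ne k i with rfl | hki
  · simp
  rcases eq_or_ne k j with rfl | hkj
  · rw [Equiv.swap_apply_right, dvd_sub_comm]
  · simp [Equiv.swap_apply_of_ne_of_ne hki hkj]

variable (m) in
/-- The Vandermonde determinant `∏_{i<j} (z_j - z_i)` of the variables. -/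
noncomputable def vandermondeZ : Laur m := (Matrix.vandermonde (Z m)).det

lemma vandermondeZ_ne_zero : vandermondeZ m ≠ 0 :=
  Matrix.det_vandermonde_ne_zero_iff.2 Z_injective

lemma smul_vandermondeZ (σ : Equiv.Perm (Fin m)) :
    σ • vandermondeZ m = Equiv.Perm.sign σ • vandermondeZ m := by
  have h : σ • vandermondeZ m = ((Matrix.vandermonde (Z m)).submatrix σ id).det :=
    calc σ • vandermondeZ m
        = (Matrix.vandermonde fun i ↦ Z m (σ i)).det := by
          rw [vandermondeZ, Matrix.det_vandermonde, Matrix.det_vandermonde]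
          simp only [Finset.smul_prod', smul_sub, smul_Z]
      _ = ((Matrix.vandermonde (Z m)).submatrix σ id).det := rfl
  rw [h, Matrix.det_permute, vandermondeZ, Units.smul_def, zsmul_eq_mul]

lemma vandermondeZ_dvd {f : Laur m} (hf : ∀ i j, i ≠ j → Z m i - Z m j ∣ f) :
    vandermondeZ m ∣ f := by
  rw [vandermondeZ, Matrix.det_vandermonde, Finset.prod_sigma']
  have lt_of_mem {x : Σ _ : Fin m, Fin m} (hx : x ∈ Finset.univ.sigma Finset.Ioi) :
      x.1 < x.2 := by
    simpa using hx
  refine prod_dvd_of_prime_of_pairwise_not_dvd (fun x hx ↦ prime_Z_sub_Z (lt_of_mem hx).ne') ?_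
    fun x hx ↦ hf _ _ (lt_of_mem hx).ne'
  rintro ⟨i, j⟩ hij ⟨k, l⟩ hkl hne hdvd
  have hij := lt_of_mem hij
  have hkl := lt_of_mem hkl
  obtain ⟨rfl, rfl⟩ | ⟨rfl, rfl⟩ := Z_sub_Z_dvd_Z_sub_Z hkl.ne' hdvd
  · exact hne rfl
  · exact hij.asymm hkl

variable (m) in
/-- The class `∏_{i<j} (z_j ⊗ 1 - 1 ⊗ z_i)` of the diagonal. -/
noncomputable def diagonalClass : Laur m ⊗[Rsym m] Laur m :=
  ∏ i : Fin m, ∏ j ∈ Finset.Ioi i, (Z m j ⊗ₜ 1 - 1 ⊗ₜ Z m i)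

lemma restrictionMap_diagonalClass :
    restrictionMap (Rsym m) (Laur m) (Equiv.Perm (Fin m)) (diagonalClass m) =
      Pi.single 1 (vandermondeZ m) := by
  ext1 w
  have restricted : restrictionMap (Rsym m) (Laur m) (Equiv.Perm (Fin m)) (diagonalClass m) w =
      ∏ i : Fin m, ∏ j ∈ Finset.Ioi i, (Z m (w j) - Z m i) := by
    simp [diagonalClass, smul_Z]
  rw [restricted]
  rcases eq_or_ne w 1 with rfl | hw
  · simp [vandermondeZ, Matrix.det_vandermonde]
  · obtain ⟨j, hj⟩ : ∃ j, w j < j := by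
      by_contra! hle
      exact hw (Equiv.ext (eq_self_of_injective_of_forall_le w.injective hle))
    rw [Pi.single_eq_of_ne hw]
    exact Finset.prod_eq_zero (Finset.mem_univ (w j))
      (Finset.prod_eq_zero (Finset.mem_Ioi.2 hj) (sub_self _))

end Laurent

section Permutahedron

variable {n : ℕ}

variable (n) in
/-- The `R`-algebra `K_α(Γ)` of the permutahedron, as a subalgebra of `Maps(S_{n+1}, R)`. -/
def permutahedronK : Subalgebra (Laur (n + 1)) (Equiv.Perm (Fin (n + 1)) → Laur (n + 1)) where
  carrier := {h | IsKPClass n h}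
  mul_mem' {h h'} hh hh' σ i j hij := by
    have leibniz : (h * h') σ - (h * h') (σ * Equiv.swap i j) =
        (h σ - h (σ * Equiv.swap i j)) * h' σ +
          h (σ * Equiv.swap i j) * (h' σ - h' (σ * Equiv.swap i j)) := by
      simp only [Pi.mul_apply]
      ring
    rw [leibniz]
    exact dvd_add ((hh σ i j hij).mul_right _) ((hh' σ i j hij).mul_left _)
  add_mem' {h h'} hh hh' σ i j hij := by
    rw [Pi.add_apply, Pi.add_apply, add_sub_add_comm]
    exact dvd_add (hh σ i j hij) (hh' σ i j hij)
  algebraMap_mem' f σ i j _ := by simp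

lemma orbit_mem_permutahedronK (f : Laur (n + 1)) : (fun w ↦ w • f) ∈ permutahedronK n := by
  intro σ i j _
  have h := map_dvd (MulSemiringAction.toRingHom _ _ σ) (Z_sub_Z_dvd_sub_swap_smul i j f)
  simpa only [MulSemiringAction.toRingHom_apply, smul_sub, smul_Z, smul_smul] using h

lemma restrictionMap_mem_permutahedronK (x : Laur (n + 1) ⊗[Rsym (n + 1)] Laur (n + 1)) :
    restrictionMap (Rsym (n + 1)) (Laur (n + 1)) (Equiv.Perm (Fin (n + 1))) x ∈
      permutahedronK n := by
  induction x using TensorProduct.induction_on with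
  | zero => simp
  | add x y hx hy => rw [map_add]; exact add_mem hx hy
  | tmul f g =>
    rw [restrictionMap_tmul_eq_smul]
    exact Subalgebra.smul_mem _ (orbit_mem_permutahedronK f) g

lemma vandermondeZ_dvd_signedSum {h : Equiv.Perm (Fin (n + 1)) → Laur (n + 1)}
    (hh : h ∈ permutahedronK n) :
    vandermondeZ (n + 1) ∣ signedSum Equiv.Perm.sign h := by
  refine vandermondeZ_dvd fun i j hij ↦ ?_
  rw [Z_sub_Z_dvd_iff, signedSum_apply, map_sum]
  refine Finset.sum_involution (fun w _ ↦ Equiv.swap i j * w) (fun w _ ↦ ?_) (fun w _ _ hw ↦ ?_)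
    (fun _ _ ↦ Finset.mem_univ _) (fun w _ ↦ by simp [← mul_assoc])
  · have edge := hh w (w.symm i) (w.symm j) (w.symm.injective.ne hij)
    rw [Equiv.mul_swap_eq_swap_mul, w.apply_symm_apply, w.apply_symm_apply, Z_sub_Z_dvd_iff,
      map_sub, sub_eq_zero] at edge
    simp [Units.smul_def, edge, Equiv.Perm.sign_swap hij]
  · exact hij (Equiv.swap_eq_one_iff.1 (mul_eq_right.1 hw))

end Permutahedron

/-- there is a (necessarily unique) ring homomorphism
`k : R ⊗_{R^{S_{n+1}}} R → Maps(S_{n+1}, R)` with `k(f ⊗ g)(w) = (w·f)·g` on decomposable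
elements, and it is a ring isomorphism onto `K_α(Γ)`. -/
theorem stmt12 (n : ℕ) (hn : 1 ≤ n) :
    ∃ k : (Laur (n + 1) ⊗[Rsym (n + 1)] Laur (n + 1)) →+*
        (Equiv.Perm (Fin (n + 1)) → Laur (n + 1)),
      (∀ (f g : Laur (n + 1)) (w : Equiv.Perm (Fin (n + 1))),
        k (f ⊗ₜ g) w = permAut (n + 1) w f * g) ∧
      Function.Injective k ∧
      Set.range k = {h | IsKPClass n h} := by
  obtain ⟨s, hs⟩ := exists_isDualSystem (restrictionMap_diagonalClass (m := n + 1))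
  have hreg := (IsRegular.of_ne_zero (vandermondeZ_ne_zero (m := n + 1))).left
  refine ⟨restrictionMap (Rsym (n + 1)) (Laur (n + 1)) (Equiv.Perm (Fin (n + 1))),
    restrictionMap_tmul, ?_, Set.Subset.antisymm ?_ fun h hh ↦ ?_⟩
  · exact hs.restrictionMap_injective hreg smul_vandermondeZ fun f ↦
      vandermondeZ_dvd_signedSum (orbit_mem_permutahedronK f)
  · rintro _ ⟨x, rfl⟩
    exact restrictionMap_mem_permutahedronK x
  · exact hs.mem_range_restrictionMap hreg smul_vandermondeZ fun f ↦
      vandermondeZ_dvd_signedSum (mul_mem hh (orbit_mem_permutahedronK f))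
end

section
/- Let n ≥ 1, let Γ be the permutahedron graph with K-ring K_α(Γ), and let π : S_{n+1} → {1,…,n+1}, π(σ) = σ(1). For p ∈ {1,…,n+1} let Γ_p be the fiber {σ ∈ S_{n+1} : σ(1) = p}, and let K(Γ_p) be the R-algebra of maps h : Γ_p → R such that (z_{σ(i)} − z_{σ(j)}) divides h(σ) − h(σ(i j)) for every σ ∈ Γ_p and every transposition (i j) with σ(i j) ∈ Γ_p. Suppose c_1,…,c_m ∈ K_α(Γ) are classes such that, for every p, the restrictions of c_1,…,c_m to Γ_p form a basis of K(Γ_p) as an R-module. Then every c ∈ K_α(Γ) can be written uniquely as c = Σ_{k=1}^m (π*β_k)·c_k, where each β_k : {1,…,n+1} → R satisfies (z_p − z_q) ∣ β_k(p) − β_k(q) for all p ≠ q (i.e., c_1,…,c_m freely generate K_α(Γ) as a module over the subring of basic classes π*(K_α(K_{n+1}))). -/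
/-- Membership in `K_α(K_{n+1})`: `(z_p − z_q) ∣ β(p) − β(q)` for all `p ≠ q`. -/
def IsKBClass (n : ℕ) (β : Fin (n + 1) → Laur (n + 1)) : Prop :=
  ∀ p q : Fin (n + 1), p ≠ q → (Z (n + 1) p - Z (n + 1) q) ∣ β p - β q

/-- The fiber `Γ_p = π^{-1}(p)` of `π : S_{n+1} → {1,…,n+1}`, `π(σ) = σ(1)` (the first
letter being coded by `0 : Fin (n+1)`). -/
def Fiber (n : ℕ) (p : Fin (n + 1)) : Type :=
  {σ : Equiv.Perm (Fin (n + 1)) // σ 0 = p}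

/-- Membership in `K(Γ_p)`: the divisibility condition along every edge of the
permutahedron both of whose endpoints lie in the fiber `Γ_p`. -/
def IsFiberClass (n : ℕ) (p : Fin (n + 1)) (h : Fiber n p → Laur (n + 1)) : Prop :=
  ∀ (σ : Fiber n p) (i j : Fin (n + 1)), i ≠ j →
    ∀ hq : (σ.1 * Equiv.swap i j) 0 = p,
      (Z (n + 1) (σ.1 i) - Z (n + 1) (σ.1 j)) ∣ h σ - h ⟨σ.1 * Equiv.swap i j, hq⟩

/-!
Setting `z_a = z_b` shows that, for `a ≠ b`, the label `z_a - z_b` is prime and divides `z_p - z_q`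
with `p ≠ q` only if `{p, q} = {a, b}`. Expand `c` over each fiber `Γ_p` with coefficients
`a_k(p)`. For `σ ∈ Γ_p`, the edge from `σ` to `Γ_q` shows that `z_p - z_q` divides
`∑ (a_k(p) - a_k(q)) c_k(σ)`. The labels of the edges inside `Γ_p` are primes not dividing
`z_p - z_q`, so the quotient is again a class on `Γ_p`. Expanding that quotient in the basis gives
`z_p - z_q ∣ a_k(p) - a_k(q)`.
-/

namespace Laur

variable {n m : ℕ}

theorem ringHom_ext_Z {A : Type*} [CommSemiring A] {f g : Laur n →+* A}
    (h : ∀ i, f (Z n i) = g (Z n i)) : f = g := by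
  ext i
  · exact RingHom.congr_fun (RingHom.ext_int _ _) i
  · exact h i

theorem Z_injective : Function.Injective (Z n) := fun _ _ hij =>
  (Pi.linearIndependent_single_one (Fin n) ℤ).injective (AddMonoidAlgebra.of_injective hij)

/-- The ring homomorphism `z_i ↦ z_{f(i)}`. It acts on exponents by summing over the fibers of
`f`. -/
noncomputable def rename (f : Fin n → Fin m) : Laur n →+* Laur m :=
  AddMonoidAlgebra.mapDomainRingHom ℤ (FunOnFinite.linearMap ℤ ℤ f).toAddMonoidHom

@[simp]
theorem rename_Z (f : Fin n → Fin m) (i : Fin n) : rename f (Z n i) = Z m (f i) := by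
  simp [rename, Z]

theorem Z_sub_Z_dvd_sub_rename (a b : Fin n) (x : Laur n) :
    Z n a - Z n b ∣ x - rename (Function.update id a b) x := by
  let mk := Ideal.Quotient.mk (Ideal.span {Z n a - Z n b})
  have mk_eq : mk = mk.comp (rename (Function.update id a b)) := by
    refine ringHom_ext_Z fun i => ?_
    rcases eq_or_ne i a with rfl | hi
    · simp [mk, Ideal.Quotient.eq]
    · simp [hi]
  rw [← Ideal.mem_span_singleton, ← Ideal.Quotient.eq]
  exact RingHom.congr_fun mk_eq x

theorem Z_sub_Z_dvd_iff {a b : Fin n} {x : Laur n} :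
    Z n a - Z n b ∣ x ↔ rename (Function.update id a b) x = 0 := by
  constructor
  · rintro ⟨y, rfl⟩
    rcases eq_or_ne b a with rfl | hba <;> simp [*]
  · intro hx
    simpa [hx] using Z_sub_Z_dvd_sub_rename a b x

theorem prime_Z_sub_Z {a b : Fin n} (hab : a ≠ b) : Prime (Z n a - Z n b) := by
  refine ⟨sub_ne_zero.2 (Z_injective.ne hab), fun hunit => ?_, fun x y hxy => ?_⟩
  · exact one_ne_zero ((map_one _).symm.trans (Z_sub_Z_dvd_iff.1 hunit.dvd))
  · simpa only [Z_sub_Z_dvd_iff, map_mul, mul_eq_zero] using hxy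

theorem not_Z_sub_Z_dvd_Z_sub_Z {a b p q : Fin n} (hap : a ≠ p) (hbp : b ≠ p) (hpq : p ≠ q) :
    ¬ Z n a - Z n b ∣ Z n p - Z n q := by
  rw [Z_sub_Z_dvd_iff, map_sub, rename_Z, rename_Z, sub_eq_zero, Z_injective.eq_iff,
    Function.update_of_ne hap.symm]
  rcases eq_or_ne q a with rfl | hqa <;> simp [*, hbp.symm]

end Laur

section FiberClasses

variable {n : ℕ} {p q : Fin (n + 1)} {κ : Type*} [Fintype κ]

theorem IsKPClass.restrict {h : Equiv.Perm (Fin (n + 1)) → Laur (n + 1)} (hh : IsKPClass n h)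
    (p : Fin (n + 1)) : IsFiberClass n p (fun σ => h σ.1) :=
  fun σ i j hij _ => hh σ.1 i j hij

theorem IsFiberClass.sum_mul {c : κ → Fiber n p → Laur (n + 1)}
    (hc : ∀ k, IsFiberClass n p (c k)) (a : κ → Laur (n + 1)) :
    IsFiberClass n p (fun σ => ∑ k, a k * c k σ) := by
  intro σ i j hij hτ
  simp only [← Finset.sum_sub_distrib, ← mul_sub]
  exact Finset.dvd_sum fun k _ => (hc k σ i j hij hτ).mul_left _

theorem Fiber.apply_ne_of_mul_swap {i j : Fin (n + 1)} (σ : Fiber n p) (hij : i ≠ j)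
    (hτ : (σ.1 * Equiv.swap i j) 0 = p) : σ.1 i ≠ p ∧ σ.1 j ≠ p := by
  have hfix : Equiv.swap i j 0 = 0 := σ.1.injective (hτ.trans σ.2.symm)
  have hne : i ≠ 0 ∧ j ≠ 0 := by
    constructor <;> rintro rfl <;> simp [hij, hij.symm] at hfix
  exact ⟨fun hi => hne.1 (σ.1.injective (hi.trans σ.2.symm)),
    fun hj => hne.2 (σ.1.injective (hj.trans σ.2.symm))⟩

theorem IsFiberClass.of_Z_sub_Z_mul {g : Fiber n p → Laur (n + 1)} (hpq : p ≠ q)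
    (hg : IsFiberClass n p (fun σ => (Z (n + 1) p - Z (n + 1) q) * g σ)) :
    IsFiberClass n p g := by
  intro σ i j hij hτ
  obtain ⟨hip, hjp⟩ := σ.apply_ne_of_mul_swap hij hτ
  have hdvd := hg σ i j hij hτ
  rw [← mul_sub] at hdvd
  exact ((Laur.prime_Z_sub_Z (σ.1.injective.ne hij)).dvd_or_dvd hdvd).resolve_left
    (Laur.not_Z_sub_Z_dvd_Z_sub_Z hip hjp hpq)

/-- Every class on the fiber `Γ_p` is a unique `R`-linear combination of the restrictions of the
`c_k` to `Γ_p`. These restrictions form a basis of `K(Γ_p)` if they are also classes, which is not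
part of the definition. -/
def HasUniqueFiberExpansion (n : ℕ) (p : Fin (n + 1))
    (c : κ → Equiv.Perm (Fin (n + 1)) → Laur (n + 1)) : Prop :=
  ∀ h : Fiber n p → Laur (n + 1), IsFiberClass n p h →
    ∃! a : κ → Laur (n + 1), h = fun σ => ∑ k, a k * c k σ.1

variable {c : κ → Equiv.Perm (Fin (n + 1)) → Laur (n + 1)}

theorem HasUniqueFiberExpansion.Z_sub_Z_dvd_coeff (hbasis : HasUniqueFiberExpansion n p c)
    (hc : ∀ k, IsFiberClass n p (fun σ => c k σ.1)) (hpq : p ≠ q) {d : κ → Laur (n + 1)}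
    (hd : ∀ σ : Fiber n p, Z (n + 1) p - Z (n + 1) q ∣ ∑ k, d k * c k σ.1) (k : κ) :
    Z (n + 1) p - Z (n + 1) q ∣ d k := by
  have hsum := IsFiberClass.sum_mul hc d
  choose g hg using hd
  have hgclass : IsFiberClass n p g :=
    IsFiberClass.of_Z_sub_Z_mul hpq (by simpa only [hg] using hsum)
  obtain ⟨b, hb, -⟩ := hbasis g hgclass
  have hdb : d = fun k => (Z (n + 1) p - Z (n + 1) q) * b k := by
    refine (hbasis _ hsum).unique rfl (funext fun σ => ?_)
    simp only [hg, hb, Finset.mul_sum, mul_assoc]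
  exact ⟨b k, congrFun hdb k⟩

theorem IsKPClass.Z_sub_Z_dvd_sum_sub_mul (hc : ∀ k, IsKPClass n (c k))
    {β : κ → Fin (n + 1) → Laur (n + 1)}
    (hβ : IsKPClass n (fun σ => ∑ k, β k (σ 0) * c k σ)) (hpq : p ≠ q) (σ : Fiber n p) :
    Z (n + 1) p - Z (n + 1) q ∣ ∑ k, (β k p - β k q) * c k σ.1 := by
  obtain ⟨σ, rfl⟩ := σ
  let τ := σ * Equiv.swap 0 (σ.symm q)
  have hτ : τ 0 = q := by simp [τ]
  have edge_dvd {h : Equiv.Perm (Fin (n + 1)) → Laur (n + 1)} (hh : IsKPClass n h) :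
      Z (n + 1) (σ 0) - Z (n + 1) q ∣ h σ - h τ := by
    simpa using hh σ 0 (σ.symm q) fun h0 => hpq (by simp [h0])
  have hsplit : ∑ k, (β k (σ 0) - β k q) * c k σ =
      (∑ k, β k (σ 0) * c k σ - ∑ k, β k (τ 0) * c k τ) - ∑ k, β k q * (c k σ - c k τ) := by
    simp only [hτ, sub_mul, mul_sub, Finset.sum_sub_distrib]
    ring
  rw [hsplit]
  exact dvd_sub (edge_dvd hβ) (Finset.dvd_sum fun k _ => (edge_dvd (hc k)).mul_left _)

theorem isKBClass_coeff (hc : ∀ k, IsKPClass n (c k))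
    (hbasis : ∀ p, HasUniqueFiberExpansion n p c) {β : κ → Fin (n + 1) → Laur (n + 1)}
    (hβ : IsKPClass n (fun σ => ∑ k, β k (σ 0) * c k σ)) (k : κ) : IsKBClass n (β k) :=
  fun p _ hpq => (hbasis p).Z_sub_Z_dvd_coeff (fun k => (hc k).restrict p) hpq
    (IsKPClass.Z_sub_Z_dvd_sum_sub_mul hc hβ hpq) k

theorem existsUnique_eq_sum_basic_mul (hbasis : ∀ p, HasUniqueFiberExpansion n p c)
    {f : Equiv.Perm (Fin (n + 1)) → Laur (n + 1)} (hf : ∀ p, IsFiberClass n p (fun σ => f σ.1)) :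
    ∃! β : κ → Fin (n + 1) → Laur (n + 1), f = fun σ => ∑ k, β k (σ 0) * c k σ := by
  choose a ha ha_unique using fun p => hbasis p _ (hf p)
  refine ⟨fun k p => a p k, funext fun σ => congrFun (ha (σ 0)) ⟨σ, rfl⟩, fun β hβ => ?_⟩
  have hβa (p : Fin (n + 1)) : (fun k => β k p) = a p := by
    refine ha_unique p _ (funext fun σ => ?_)
    simp only [hβ, σ.2]
  exact funext₂ fun k p => congrFun (hβa p) k

end FiberClasses

/-- if `c_1,…,c_m ∈ K_α(Γ)` restrict on every fiber `Γ_p` of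
`π : S_{n+1} → {1,…,n+1}` to a basis of `K(Γ_p)` over `R`, then every `c ∈ K_α(Γ)` is
uniquely a combination `c = Σ_k (π*β_k)·c_k` with each `β_k ∈ K_α(K_{n+1})`; i.e. the
`c_k` freely generate `K_α(Γ)` over the subring of basic classes. -/
theorem stmt14 (n : ℕ) (hn : 1 ≤ n) (m : ℕ)
    (c : Fin m → Equiv.Perm (Fin (n + 1)) → Laur (n + 1))
    (hc : ∀ k, IsKPClass n (c k))
    (hrestr : ∀ p : Fin (n + 1), ∀ k, IsFiberClass n p (fun σ => c k σ.1))
    (hbasis : ∀ p : Fin (n + 1), ∀ h : Fiber n p → Laur (n + 1), IsFiberClass n p h →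
      ∃! a : Fin m → Laur (n + 1), h = fun σ => ∑ k : Fin m, a k * c k σ.1) :
    ∀ cc : Equiv.Perm (Fin (n + 1)) → Laur (n + 1), IsKPClass n cc →
      ∃! β : Fin m → (Fin (n + 1) → Laur (n + 1)),
        (∀ k, IsKBClass n (β k)) ∧
        cc = fun σ => ∑ k : Fin m, β k (σ 0) * c k σ := by
  intro cc hcc
  obtain ⟨β, hβ, hβ_unique⟩ := existsUnique_eq_sum_basic_mul hbasis hcc.restrict
  exact ⟨β, ⟨isKBClass_coeff hc hbasis (hβ ▸ hcc), hβ⟩, fun γ hγ => hβ_unique γ hγ.2⟩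
end
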